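/- Let T = (T_1, …, T_n) be a Beurling tuple on a complex Hilbert space H, let j ∈ {1, …, n}, let P ⊆ {1, …, n} \ {j}, and let i ∈ {1, …, n} \ (P ∪ {j}). Then T_i maps the truncated defect space 𝒟_{j,T,P} into itself, i.e., T_i(𝒟_{j,T,P}) ⊆ 𝒟_{j,T,P}, where 𝒟_{j,T,P} is the closure of the range of D²_{j,T,P} (equivalently, of its positive square root D_{j,T,P}). -/

import Mathlib

/-!
The closure of the range of the self-adjoint operator `A = D²_{j,T,P}` is `(ker A)ᗮ`, so it suffices
that `(T i)*` preserves `ker A` (`image_closure_range_subset`). This is read off from a dilation.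

Iterating the telescoping identity `B = ∑ₘ Tᵐ (B − T B T*) T*ᵐ` over the coordinates gives
`∑_α T^α 𝕊⁻¹ T^{*α} = I` (`hasSum_szego`). Writing `𝕊⁻¹ = D* D`, the map `V h = (D T^{*α} h)_α` is
therefore an isometry from `H` into `K = ℓ²(ℕⁿ, H)`, and it intertwines `(T i)*` with the adjoint of
the `i`-th coordinate shift `M i`; the `M i` are doubly commuting isometries (`exists_model`).

Let `S = I − V V*`, `Y j = S (M j) V` and `R k = (M k) S`. The range of `S` is invariant under the
shifts, and

* `I − (T j)* (T j) = (Y j)* (Y j)`;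
* `(T k) (Y j)* = (Y j)* (R k)` for `k ≠ j`, because `M k` commutes with `(M j)*`;
* the Beurling condition amounts to `(Y i) (Y k)* = 0` for `i ≠ k`, which makes the `R k` doubly
  commuting (`IsModel.doubly_compl`).

Consequently `A = (Y j)* F (Y j)`, where `F = ∏_{k ∈ P} (I − R k (R k)*)` is a projection commuting
with `(R i)*` for `i ∉ P`. Thus `A h = 0` means `F (Y j) h = 0`, and then
`A (T i)* h = (Y j)* F (R i)* (Y j) h = (Y j)* (R i)* F (Y j) h = 0`.
-/

open ContinuousLinearMap Filter Topology

variable {H : Type*} [NormedAddCommGroup H] [InnerProductSpace ℂ H] [CompleteSpace H]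

/-- `T^k = T 0 ^ k 0 * T 1 ^ k 1 * ⋯` in increasing index order. -/
noncomputable def finPow {n : ℕ} (T : Fin n → H →L[ℂ] H) (k : Fin n → ℕ) : H →L[ℂ] H :=
  ((List.finRange n).map fun i => T i ^ k i).prod

/-- `𝕊ₙ⁻¹(T, T*) = ∑_{k ∈ {0,1}ⁿ} (−1)^{|k|} T^k T^{*k}`. -/
noncomputable def szegoInv {n : ℕ} (T : Fin n → H →L[ℂ] H) : H →L[ℂ] H :=
  ∑ k : Fin n → Bool,
    ((-1 : ℂ) ^ (∑ i, if k i then 1 else 0)) •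
      (finPow T (fun i => if k i then 1 else 0) *
        adjoint (finPow T (fun i => if k i then 1 else 0)))

/-- A Szegő tuple: commuting contractions, `𝕊ₙ⁻¹(T,T*) ≥ 0`, each `Tᵢ` of class `C_{·0}`. -/
structure IsSzegoTuple {n : ℕ} (T : Fin n → H →L[ℂ] H) : Prop where
  comm : ∀ i j, T i * T j = T j * T i
  contraction : ∀ i, ‖T i‖ ≤ 1
  pos : (szegoInv T).IsPositive
  pure : ∀ i (h : H), Tendsto (fun m : ℕ => (adjoint (T i) ^ m) h) atTop (𝓝 0)

/-- A Beurling tuple: a Szegő tuple with `(I − Tᵢ*Tᵢ)(I − Tⱼ*Tⱼ) = 0` for `i ≠ j`. -/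
def IsBeurlingTuple {n : ℕ} (T : Fin n → H →L[ℂ] H) : Prop :=
  IsSzegoTuple T ∧
    ∀ i j, i ≠ j → (1 - adjoint (T i) * T i) * (1 - adjoint (T j) * T j) = 0

/-- Apply `∏_{k ∈ L} (I − Δ_{T k})` to `A`, where `Δ_X(A) = X A X*`. -/
noncomputable def applyDelta {n : ℕ} (T : Fin n → H →L[ℂ] H) (L : List (Fin n))
    (A : H →L[ℂ] H) : H →L[ℂ] H :=
  L.foldr (fun k B => B - T k * B * adjoint (T k)) A

/-- The truncated defect operator `D²_{j,T,P} = (∏_{k ∈ P} (I − Δ_{T k}))(I − Tⱼ*Tⱼ)`. -/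
noncomputable def truncDefectSq {n : ℕ} (T : Fin n → H →L[ℂ] H) (j : Fin n)
    (P : Finset (Fin n)) : H →L[ℂ] H :=
  applyDelta T (P.sort (· ≤ ·)) (1 - adjoint (T j) * T j)

/-- `D²_{j,T} = D²_{j,T,P}` for `P = {1,…,n} \ {j}`. -/
noncomputable def jointDefectSq {n : ℕ} (T : Fin n → H →L[ℂ] H) (j : Fin n) : H →L[ℂ] H :=
  truncDefectSq T j (Finset.univ.erase j)

/-- The `(i,j)`-th joint commutator `δᵢⱼ(T) = (∏_{k ∉ {i,j}} (I − Δ_{T k}))([Tⱼ, Tᵢ*])`. -/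
noncomputable def jointComm {n : ℕ} (T : Fin n → H →L[ℂ] H) (i j : Fin n) : H →L[ℂ] H :=
  applyDelta T (((Finset.univ.erase i).erase j).sort (· ≤ ·))
    (T j * adjoint (T i) - adjoint (T i) * T j)

/-- Extend a multi-index supported on `P` by zero: gives `T_P^α` via `finPow`. -/
def extendSupport {n : ℕ} (P : Finset (Fin n)) (α : ↥P → ℕ) : Fin n → ℕ :=
  fun i => if h : i ∈ P then α ⟨i, h⟩ else 0

open scoped InnerProductSpace

/-! ### The Szegő kernel as a sum of squares -/

section Szego

omit [CompleteSpace H] in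
theorem finPow_succ {n : ℕ} (T : Fin (n + 1) → H →L[ℂ] H) (k : Fin (n + 1) → ℕ) :
    finPow T k = T 0 ^ k 0 * finPow (fun i => T i.succ) (fun i => k i.succ) := by
  simp [finPow, List.finRange_succ, Function.comp_def]

omit [CompleteSpace H] in
theorem commute_finPow {n : ℕ} (T : Fin n → H →L[ℂ] H) (k : Fin n → ℕ) (X : H →L[ℂ] H)
    (hX : ∀ i, X * T i = T i * X) : Commute X (finPow T k) := by
  refine Commute.list_prod_right _ _ ?_
  intro y hy
  obtain ⟨i, -, rfl⟩ := List.mem_map.1 hy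
  exact Commute.pow_right (hX i) _

omit [CompleteSpace H] in
theorem finPow_add_single {n : ℕ} (T : Fin n → H →L[ℂ] H)
    (hT : ∀ i j, T i * T j = T j * T i) (k : Fin n → ℕ) (i : Fin n) :
    finPow T (k + Pi.single i 1) = T i * finPow T k := by
  induction n with
  | zero => exact i.elim0
  | succ n ih =>
    rw [finPow_succ, finPow_succ]
    refine Fin.cases ?_ (fun i => ?_) i
    · simp [pow_succ', mul_assoc]
    · have h1 : (fun j : Fin n => (k + Pi.single i.succ 1 : Fin (n + 1) → ℕ) j.succ)
          = (fun j : Fin n => k j.succ) + Pi.single i 1 := by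
        funext j
        simp [Pi.single_apply]
      have h2 : T i.succ * T 0 ^ k 0 = T 0 ^ k 0 * T i.succ :=
        Commute.pow_right (hT i.succ 0) _
      have h3 : (k + Pi.single i.succ 1 : Fin (n + 1) → ℕ) 0 = k 0 := by
        simp
      rw [h1, h3, ih (fun j => T j.succ) (fun a b => hT _ _), ← mul_assoc, ← mul_assoc, h2]

/-- `𝕊⁻¹` of an `(n+1)`-tuple is `I − Δ_{T 0}` applied to `𝕊⁻¹` of the remaining `n`-tuple. -/
theorem szegoInv_succ {n : ℕ} (T : Fin (n + 1) → H →L[ℂ] H) :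
    szegoInv T = szegoInv (fun i => T i.succ)
      - T 0 * szegoInv (fun i => T i.succ) * adjoint (T 0) := by
  have hsplit : szegoInv T = ∑ p : Bool × (Fin n → Bool),
      ((-1 : ℂ) ^ ((if p.1 then 1 else 0) + ∑ i, if p.2 i then 1 else 0)) •
      ((T 0 ^ (if p.1 then 1 else 0) *
          finPow (fun i => T i.succ) (fun i => if p.2 i then 1 else 0)) *
        adjoint (T 0 ^ (if p.1 then 1 else 0) *
          finPow (fun i => T i.succ) (fun i => if p.2 i then 1 else 0))) := by
    unfold szegoInv
    refine (Fintype.sum_equiv (Fin.consEquiv (fun _ => Bool)) _ _ ?_).symm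
    rintro ⟨b, k⟩
    simp only [finPow_succ, Fin.sum_univ_succ, Fin.consEquiv_apply, Fin.cons_zero, Fin.cons_succ]
  rw [hsplit, Fintype.sum_prod_type, Fintype.sum_bool]
  simp only [szegoInv, Finset.mul_sum, Finset.sum_mul, sub_eq_add_neg, ← Finset.sum_neg_distrib,
    if_true, pow_add, pow_one, Bool.false_eq_true, if_false, pow_zero, one_mul]
  rw [add_comm]
  congr 1
  refine Finset.sum_congr rfl fun k _ => ?_
  simp only [neg_smul, one_mul, neg_mul, ← star_eq_adjoint, star_mul, mul_smul_comm,
    smul_mul_assoc, mul_assoc]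

/-- If `T*^m → 0` strongly and `C = B − T B T*` has nonnegative form, then the form of `B` is the
sum of the forms of `T^m C T*^m`. -/
theorem hasSum_telescope (B T : H →L[ℂ] H)
    (hpure : ∀ h, Tendsto (fun m : ℕ => (adjoint T ^ m) h) atTop (𝓝 0))
    (hC : ∀ h, 0 ≤ (⟪(B - T * B * adjoint T) h, h⟫_ℂ).re) (h : H) :
    HasSum (fun m : ℕ => (⟪(B - T * B * adjoint T) ((adjoint T ^ m) h),
      (adjoint T ^ m) h⟫_ℂ).re) (⟪B h, h⟫_ℂ).re := by
  rw [hasSum_iff_tendsto_nat_of_nonneg (fun m => hC _)]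
  have hterm : ∀ m : ℕ, (⟪(B - T * B * adjoint T) ((adjoint T ^ m) h),
      (adjoint T ^ m) h⟫_ℂ).re =
      (⟪B ((adjoint T ^ m) h), (adjoint T ^ m) h⟫_ℂ).re -
      (⟪B ((adjoint T ^ (m + 1)) h), (adjoint T ^ (m + 1)) h⟫_ℂ).re := by
    intro m
    simp [pow_succ', adjoint_inner_right]
  simp only [hterm, Finset.sum_range_sub']
  have hlim : Tendsto (fun m : ℕ => (⟪B ((adjoint T ^ m) h), (adjoint T ^ m) h⟫_ℂ).re)
      atTop (𝓝 0) := by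
    have hcont : Continuous fun x : H => (⟪B x, x⟫_ℂ).re := by fun_prop
    simpa [Function.comp_def] using (hcont.tendsto 0).comp (hpure h)
  simpa using hlim.const_sub (⟪B h, h⟫_ℂ).re

/-- Nonnegative double series may be summed iteratedly. -/
theorem hasSum_prod_of_nonneg {β γ : Type*} {f : β × γ → ℝ} {g : β → ℝ} {a : ℝ}
    (h0 : ∀ p, 0 ≤ f p) (hf : ∀ b, HasSum (fun c => f (b, c)) (g b)) (hg : HasSum g a) :
    HasSum f a := by
  have hs : Summable f := by
    rw [summable_prod_of_nonneg h0]
    refine ⟨fun b => (hf b).summable, ?_⟩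
    simpa [fun b => (hf b).tsum_eq] using hg.summable
  have := (hs.hasSum.prod_fiberwise hf).unique hg
  exact this ▸ hs.hasSum

/-- For a pure commuting tuple with `𝕊⁻¹ ≥ 0`, `∑_α T^α 𝕊⁻¹ T^{*α} = I` in the weak sense. -/
theorem hasSum_szego {n : ℕ} (T : Fin n → H →L[ℂ] H)
    (hcomm : ∀ i j, T i * T j = T j * T i)
    (hpure : ∀ i (h : H), Tendsto (fun m : ℕ => (adjoint (T i) ^ m) h) atTop (𝓝 0))
    (hpos : ∀ h, 0 ≤ (⟪szegoInv T h, h⟫_ℂ).re) (h : H) :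
    HasSum (fun α : Fin n → ℕ => (⟪szegoInv T (adjoint (finPow T α) h),
      adjoint (finPow T α) h⟫_ℂ).re) (‖h‖ ^ 2) := by
  induction n with
  | zero =>
    have h1 : ∀ α, finPow T α = 1 := fun α => by simp [finPow]
    have h2 : szegoInv T = 1 := by simp [szegoInv, h1, ← star_eq_adjoint]
    have h3 : (fun α : Fin 0 → ℕ => (⟪szegoInv T (adjoint (finPow T α) h),
        adjoint (finPow T α) h⟫_ℂ).re) = fun _ => ‖h‖ ^ 2 := by
      funext α
      simpa [h1, h2, ← star_eq_adjoint] using inner_self_eq_norm_sq (𝕜 := ℂ) h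
    rw [h3]
    exact hasSum_unique _
  | succ n ih =>
    set T' : Fin n → H →L[ℂ] H := fun i => T i.succ with hT'
    have hS := szegoInv_succ T
    have htel := hasSum_telescope (szegoInv T') (T 0) (hpure 0) (by rw [← hS]; exact hpos)
    rw [← hS] at htel
    have hpos' : ∀ h, 0 ≤ (⟪szegoInv T' h, h⟫_ℂ).re := fun h =>
      (htel h).nonneg fun m => hpos _
    have hI := ih T' (fun i j => hcomm _ _) (fun i => hpure _) hpos'
    have hprod := hasSum_prod_of_nonneg
      (f := fun p : (Fin n → ℕ) × ℕ =>
        (⟪szegoInv T ((adjoint (T 0) ^ p.2) (adjoint (finPow T' p.1) h)),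
          (adjoint (T 0) ^ p.2) (adjoint (finPow T' p.1) h)⟫_ℂ).re)
      (fun p => hpos _) (fun α => htel (adjoint (finPow T' α) h)) hI
    let e : (Fin n → ℕ) × ℕ ≃ (Fin (n + 1) → ℕ) :=
      (Equiv.prodComm _ _).trans (Fin.consEquiv (fun _ => ℕ))
    refine (e.hasSum_iff).1 ?_
    convert hprod using 1
    funext p
    have hadj : adjoint (finPow T (e p)) = adjoint (T 0) ^ p.2 * adjoint (finPow T' p.1) := by
      have h1 : finPow T (e p) = T 0 ^ p.2 * finPow T' p.1 := by
        rw [finPow_succ]; rfl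
      have h2 : T 0 ^ p.2 * finPow T' p.1 = finPow T' p.1 * T 0 ^ p.2 :=
        (commute_finPow T' p.1 (T 0) (fun i => hcomm _ _)).pow_left _
      rw [h1, h2, ← star_eq_adjoint, star_mul, star_pow]
      rfl
    simp only [Function.comp_apply, hadj, mul_apply_eq_comp]

end Szego

/-! ### Shifts on `ℓ²(ι, H)` -/

section Shift

variable {ι : Type*}

/-- The isometry of `ℓ²(ι, H)` moving the coordinate `a` to the coordinate `σ a`. -/
noncomputable def pushShift (H : Type*) [NormedAddCommGroup H] [InnerProductSpace ℂ H]
    (σ : ι → ι) (hσ : Function.Injective σ) :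
    lp (fun _ : ι => H) 2 →ₗᵢ[ℂ] lp (fun _ : ι => H) 2 where
  toFun f := ⟨Function.extend σ f 0, by
    have hf := (memℓp_gen_iff (p := 2) (by norm_num)).1 (lp.memℓp f)
    refine (memℓp_gen_iff (p := 2) (by norm_num)).2 ?_
    have := (hasSum_extend_zero hσ).2 hf.hasSum
    convert this.summable using 1
    funext a
    by_cases ha : ∃ b, σ b = a
    · obtain ⟨b, rfl⟩ := ha
      simp [hσ.extend_apply]
    · simp [Function.extend_apply' _ _ _ ha]⟩
  map_add' f g := by
    ext a
    by_cases ha : ∃ b, σ b = a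
    · obtain ⟨b, rfl⟩ := ha
      simp only [lp.coeFn_add, Pi.add_apply, hσ.extend_apply]
    · simp only [lp.coeFn_add, Pi.add_apply, Function.extend_apply' _ _ _ ha, Pi.zero_apply,
        add_zero]
  map_smul' c f := by
    ext a
    by_cases ha : ∃ b, σ b = a
    · obtain ⟨b, rfl⟩ := ha
      simp [hσ.extend_apply]
    · simp [Function.extend_apply' _ _ _ ha]
  norm_map' f := by
    have h2 : (0 : ℝ) < (2 : ENNReal).toReal := by norm_num
    have hf := (hasSum_extend_zero hσ).2 (lp.hasSum_norm h2 f)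
    have hg := lp.hasSum_norm h2 (⟨Function.extend σ f 0, by
      refine (memℓp_gen_iff h2).2 ?_
      convert hf.summable using 1
      funext a
      by_cases ha : ∃ b, σ b = a
      · obtain ⟨b, rfl⟩ := ha
        simp [hσ.extend_apply]
      · simp [Function.extend_apply' _ _ _ ha]⟩ : lp (fun _ : ι => H) 2)
    have heq := hg.unique (by
      convert hf using 1
      funext a
      by_cases ha : ∃ b, σ b = a
      · obtain ⟨b, rfl⟩ := ha
        simp [hσ.extend_apply]
      · simp [Function.extend_apply' _ _ _ ha])
    exact (Real.rpow_left_inj (norm_nonneg _) (norm_nonneg _) h2.ne').1 heq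

omit [CompleteSpace H] in
theorem pushShift_apply (σ : ι → ι) (hσ : Function.Injective σ) (f : lp (fun _ : ι => H) 2)
    (a : ι) : pushShift H σ hσ f (σ a) = f a := hσ.extend_apply _ _ _

omit [CompleteSpace H] in
theorem pushShift_apply_of_notMem (σ : ι → ι) (hσ : Function.Injective σ)
    (f : lp (fun _ : ι => H) 2) (a : ι) (ha : a ∉ Set.range σ) : pushShift H σ hσ f a = 0 :=
  Function.extend_apply' _ _ _ (by simpa using ha)

theorem adjoint_pushShift_apply (σ : ι → ι) (hσ : Function.Injective σ)
    (f : lp (fun _ : ι => H) 2) (a : ι) :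
    adjoint (pushShift H σ hσ).toContinuousLinearMap f a = f (σ a) := by
  classical
  refine ext_inner_left ℂ fun v => ?_
  have hsingle : pushShift H σ hσ (lp.single 2 a v) = lp.single 2 (σ a) v := by
    ext b
    by_cases hb : b ∈ Set.range σ
    · obtain ⟨b, rfl⟩ := hb
      rw [pushShift_apply, lp.single_apply, lp.single_apply, Pi.single_apply, Pi.single_apply]
      simp [hσ.eq_iff]
    · rw [pushShift_apply_of_notMem _ _ _ _ hb, lp.single_apply_ne]
      rintro rfl
      exact hb ⟨a, rfl⟩
  have key := adjoint_inner_right (pushShift H σ hσ).toContinuousLinearMap (lp.single 2 a v) f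
  rw [lp.inner_single_left] at key
  rw [key]
  exact (congrArg (fun x => ⟪x, f⟫_ℂ) hsingle).trans (lp.inner_single_left _ _ _)

end Shift

/-! ### Dilation to doubly commuting isometries -/

section Dilation

variable {K : Type*} [NormedAddCommGroup K] [InnerProductSpace ℂ K] [CompleteSpace K]

/-- A doubly commuting isometric lifting of `T`: doubly commuting isometries `M i` on a Hilbert
space `K`, together with an isometric embedding `V` of `H` onto a subspace invariant under every
`(M i)*`, on which `(M i)*` restricts to `(T i)*`. -/
structure IsModel {n : ℕ} (T : Fin n → H →L[ℂ] H) (V : H →L[ℂ] K) (M : Fin n → K →L[ℂ] K) :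
    Prop where
  isom : ∀ h, adjoint V (V h) = h
  isometry : ∀ i, adjoint (M i) * M i = 1
  comm : ∀ i j, M i * M j = M j * M i
  doubly : ∀ i j, i ≠ j → M i * adjoint (M j) = adjoint (M j) * M i
  lift : ∀ i h, V (adjoint (T i) h) = adjoint (M i) (V h)

/-- A Szegő tuple lifts to the coordinate shifts on `ℓ²(ℕⁿ, H)`: with `𝕊⁻¹ = D* D`, the embedding
is `h ↦ (D T^{*α} h)_α`. -/
theorem exists_model {n : ℕ} (T : Fin n → H →L[ℂ] H) (hT : IsSzegoTuple T) :
    ∃ (V : H →L[ℂ] lp (fun _ : Fin n → ℕ => H) 2)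
      (M : Fin n → lp (fun _ : Fin n → ℕ => H) 2 →L[ℂ] lp (fun _ : Fin n → ℕ => H) 2),
      IsModel T V M := by
  obtain ⟨D, hD⟩ := CStarAlgebra.nonneg_iff_eq_star_mul_self.1
    ((nonneg_iff_isPositive _).2 hT.pos)
  have h2 : (0 : ℝ) < (2 : ENNReal).toReal := by norm_num
  have hsum : ∀ h, HasSum (fun α => ‖D (adjoint (finPow T α) h)‖ ^ 2) (‖h‖ ^ 2) := by
    intro h
    have := hasSum_szego T hT.comm hT.pure (fun h => hT.pos.re_inner_nonneg_left h) h
    convert this using 2 with α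
    rw [hD, mul_apply_eq_comp, star_eq_adjoint, adjoint_inner_left]
    exact (inner_self_eq_norm_sq (𝕜 := ℂ) _).symm
  have hmem : ∀ h, Memℓp (fun α => D (adjoint (finPow T α) h)) 2 := fun h =>
    (memℓp_gen_iff h2).2 (by simpa using (hsum h).summable)
  let V₀ : H →ₗ[ℂ] lp (fun _ : Fin n → ℕ => H) 2 :=
    { toFun := fun h => ⟨fun α => D (adjoint (finPow T α) h), hmem h⟩
      map_add' := fun x y => by
        ext α
        simp
        rfl
      map_smul' := fun c x => by
        ext α
        simp }
  let V : H →ₗᵢ[ℂ] lp (fun _ : Fin n → ℕ => H) 2 :=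
    { V₀ with
      norm_map' := fun h => by
        have h1 := lp.hasSum_norm h2 (V₀ h)
        have h3 := h1.unique (by simpa [V₀] using hsum h)
        exact (sq_eq_sq₀ (norm_nonneg _) (norm_nonneg _)).1 (by simpa using h3) }
  let σ : Fin n → (Fin n → ℕ) → (Fin n → ℕ) := fun i α => α + Pi.single i 1
  have hσ : ∀ i, Function.Injective (σ i) := fun i => add_left_injective _
  have hσσ : ∀ i j α, σ i (σ j α) = σ j (σ i α) := fun i j α => add_right_comm _ _ _
  have hmemσ : ∀ i α, α ∈ Set.range (σ i) ↔ α i ≠ 0 := by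
    intro i α
    constructor
    · rintro ⟨β, rfl⟩
      simp [σ]
    · intro h
      refine ⟨α - Pi.single i 1, ?_⟩
      funext k
      by_cases hk : k = i
      · subst hk
        simp [σ]
        omega
      · simp [σ, hk]
  let M : Fin n → lp (fun _ : Fin n → ℕ => H) 2 →L[ℂ] lp (fun _ : Fin n → ℕ => H) 2 :=
    fun i => (pushShift H (σ i) (hσ i)).toContinuousLinearMap
  have hMadj : ∀ i f α, adjoint (M i) f α = f (σ i α) := fun i f α =>
    adjoint_pushShift_apply (σ i) (hσ i) f α
  have hM : ∀ i f α, M i f (σ i α) = f α := fun i f α => pushShift_apply (σ i) (hσ i) f α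
  have hM0 : ∀ i f α, α ∉ Set.range (σ i) → M i f α = 0 := fun i f α =>
    pushShift_apply_of_notMem (σ i) (hσ i) f α
  refine ⟨V.toContinuousLinearMap, M, ?_, ?_, ?_, ?_, ?_⟩
  · intro h
    refine ext_inner_left ℂ fun v => ?_
    rw [adjoint_inner_right]
    exact V.inner_map_map v h
  · intro i
    ext f α
    exact (hMadj i _ α).trans (hM i f α)
  · intro i j
    have : adjoint (M i) * adjoint (M j) = adjoint (M j) * adjoint (M i) := by
      ext f α
      change adjoint (M i) (adjoint (M j) f) α = adjoint (M j) (adjoint (M i) f) α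
      rw [hMadj, hMadj, hMadj, hMadj, hσσ]
    have := congrArg star this
    simpa only [← star_eq_adjoint, star_mul, star_star] using this.symm
  · intro i j hij
    ext f α
    change M i (adjoint (M j) f) α = adjoint (M j) (M i f) α
    rw [hMadj]
    by_cases hα : α ∈ Set.range (σ i)
    · obtain ⟨β, rfl⟩ := hα
      rw [hM, hMadj, hσσ, hM]
    · rw [hM0 _ _ _ hα, hM0]
      rw [hmemσ] at hα ⊢
      simpa [σ, Pi.single_apply, hij] using hα
  · intro i h
    ext α
    rw [hMadj]
    change D (adjoint (finPow T α) (adjoint (T i) h)) = D (adjoint (finPow T (σ i α)) h)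
    rw [finPow_add_single T hT.comm, ← star_eq_adjoint (T i * _), star_mul]
    rfl

/-- Products of commuting range defects: for doubly commuting partial isometries `R k`, the operator
`∏_{k ∈ L} (I − Δ_{R k})(I) = ∏_{k ∈ L} (I − R k (R k)*)` is a projection which doubly commutes
with the remaining `R i`. -/
theorem applyDelta_one_isProjection {n : ℕ} (R : Fin n → K →L[ℂ] K)
    (hcomm : ∀ i k, i ≠ k → Commute (R i) (R k))
    (hdoubly : ∀ i k, i ≠ k → Commute (R i) (star (R k)))
    (hpartial : ∀ k, R k * star (R k) * R k = R k) (L : List (Fin n)) (hL : L.Nodup) :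
    star (applyDelta R L 1) = applyDelta R L 1 ∧
    applyDelta R L 1 * applyDelta R L 1 = applyDelta R L 1 ∧
    ∀ i, i ∉ L → Commute (R i) (applyDelta R L 1) := by
  induction L with
  | nil => simp [applyDelta]
  | cons k L ih =>
    obtain ⟨hkL, hL⟩ := List.nodup_cons.1 hL
    obtain ⟨hstar, hidem, hF⟩ := ih hL
    have hdef : applyDelta R (k :: L) 1
        = applyDelta R L 1 - R k * applyDelta R L 1 * star (R k) := rfl
    rw [hdef]
    set F := applyDelta R L 1
    refine ⟨?_, ?_, ?_⟩
    · simp [hstar, mul_assoc]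
    · have hkF := hF k hkL
      have hkF' : Commute (star (R k)) F := by
        have := hkF.star_star
        rwa [hstar] at this
      have hP : R k * star (R k) * (R k * star (R k)) = R k * star (R k) := by
        rw [← mul_assoc, hpartial]
      have hPF : Commute F (R k * star (R k)) := (hkF.mul_left hkF').symm
      have hFP : R k * F * star (R k) = F * (R k * star (R k)) := by
        rw [hkF.eq, mul_assoc]
      have hsq : F * (R k * star (R k)) * (F * (R k * star (R k))) = F * (R k * star (R k)) := by
        rw [mul_assoc, ← mul_assoc _ F, ← hPF.eq, mul_assoc F, hP, ← mul_assoc, hidem]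
      have hl : F * (F * (R k * star (R k))) = F * (R k * star (R k)) := by
        rw [← mul_assoc, hidem]
      have hr : F * (R k * star (R k)) * F = F * (R k * star (R k)) := by
        rw [mul_assoc, ← hPF.eq, hl]
      rw [hFP, sub_mul, mul_sub, mul_sub, hidem, hsq, hl, hr, sub_self, sub_zero]
    · intro i hi
      obtain ⟨hik, hiL⟩ := not_or.1 (List.mem_cons.not.1 hi)
      exact (hF i hiL).sub_right
        (((hcomm i k hik).mul_right (hF i hiL)).mul_right (hdoubly i k hik))

theorem apply_eq_zero_of_adjoint_apply_eq_zero (A : H →L[ℂ] K) (x : H)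
    (h : adjoint A (A x) = 0) : A x = 0 := by
  rw [← inner_self_eq_zero (𝕜 := ℂ), ← adjoint_inner_left, h, inner_zero_left]

namespace IsModel

variable {n : ℕ} {T : Fin n → H →L[ℂ] H} {V : H →L[ℂ] K} {M : Fin n → K →L[ℂ] K}

/-- For an isometry `V`, the projection `S = I − V V*` of `K` onto the orthogonal complement of the
range of `V`. -/
noncomputable def compl (V : H →L[ℂ] K) : K →L[ℂ] K := 1 - V ∘L adjoint V

/-- `Y j = S (M j) V`, where `S = I − V V*`; for a model of `T` it satisfies
`(Y j)* (Y j) = I − (T j)* (T j)`. -/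
noncomputable def corner (V : H →L[ℂ] K) (M : Fin n → K →L[ℂ] K) (j : Fin n) : H →L[ℂ] K :=
  compl V ∘L M j ∘L V

theorem compl_apply (x : K) : compl V x = x - V (adjoint V x) := rfl

theorem corner_apply (j : Fin n) (h : H) : corner V M j h = compl V (M j (V h)) := rfl

theorem star_compl : star (compl V) = compl V := by
  simp [compl, star_eq_adjoint, adjoint_comp]

theorem adjoint_corner_apply (j : Fin n) (x : K) :
    adjoint (corner V M j) x = adjoint V (adjoint (M j) (compl V x)) := by
  rw [corner, adjoint_comp, adjoint_comp, ← star_eq_adjoint (compl V), star_compl]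
  rfl

variable (hM : IsModel T V M)
include hM

theorem adjoint_apply (k : Fin n) (x : K) : adjoint V (M k x) = T k (adjoint V x) := by
  refine ext_inner_right ℂ fun h => ?_
  rw [adjoint_inner_left, ← adjoint_inner_right (M k), ← hM.lift, ← adjoint_inner_left V,
    adjoint_inner_right]

theorem adjoint_compl (x : K) : adjoint V (compl V x) = 0 := by
  rw [compl_apply, map_sub, hM.isom, sub_self]

theorem compl_mul_compl : compl V * compl V = compl V := by
  ext x
  change compl V (compl V x) = compl V x
  rw [compl_apply (compl V x), hM.adjoint_compl, map_zero, sub_zero]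

theorem compl_shift_compl (k : Fin n) (x : K) :
    compl V (M k (compl V x)) = M k (compl V x) := by
  rw [compl_apply (M k _), hM.adjoint_apply, hM.adjoint_compl, map_zero, map_zero, sub_zero]

/-- `(Y j)* (Y j) = I − (T j)* (T j)`. -/
theorem adjoint_corner_corner (j : Fin n) (h : H) :
    adjoint (corner V M j) (corner V M j h) = (1 - adjoint (T j) * T j) h := by
  have h1 : ∀ x, adjoint (M j) (M j x) = x := fun x => DFunLike.congr_fun (hM.isometry j) x
  have h2 : compl V (compl V (M j (V h))) = compl V (M j (V h)) :=
    DFunLike.congr_fun hM.compl_mul_compl _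
  rw [adjoint_corner_apply, corner_apply, h2, compl_apply, map_sub, map_sub, h1, hM.isom,
    ← hM.lift, hM.isom, hM.adjoint_apply, hM.isom]
  rfl

/-- `T k` is intertwined with the restriction of `M k` to the complement of the range of `V`. -/
theorem apply_adjoint_corner (j k : Fin n) (hkj : k ≠ j) (x : K) :
    T k (adjoint (corner V M j) x) = adjoint (corner V M j) ((M k * compl V) x) := by
  change _ = adjoint (corner V M j) (M k (compl V x))
  rw [adjoint_corner_apply, adjoint_corner_apply, hM.compl_shift_compl, ← hM.adjoint_apply]
  congr 1
  exact DFunLike.congr_fun (hM.doubly k j hkj) _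

theorem corner_adjoint_apply (j k : Fin n) (hkj : k ≠ j) (h : H) :
    corner V M j (adjoint (T k) h) = star (M k * compl V) (corner V M j h) := by
  refine ext_inner_right ℂ fun x => ?_
  rw [star_eq_adjoint, adjoint_inner_left, ← adjoint_inner_right (corner V M j),
    adjoint_inner_left, hM.apply_adjoint_corner j k hkj, adjoint_inner_right]

/-- `D²_{j,T,L} = (Y j)* F (Y j)` with `F = ∏_{k ∈ L} (I − R k (R k)*)` and `R k = (M k) S`. -/
theorem applyDelta_defect (j : Fin n) (L : List (Fin n)) (hj : j ∉ L) (h : H) :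
    applyDelta T L (1 - adjoint (T j) * T j) h =
      adjoint (corner V M j)
        (applyDelta (fun k => M k * compl V) L 1 (corner V M j h)) := by
  induction L generalizing h with
  | nil => exact (hM.adjoint_corner_corner j h).symm
  | cons k L ih =>
    obtain ⟨hjk, hjL⟩ := not_or.1 (List.mem_cons.not.1 hj)
    change applyDelta T L _ h - T k (applyDelta T L _ (adjoint (T k) h)) = adjoint (corner V M j)
      (applyDelta _ L 1 (corner V M j h) - (M k * compl V) (applyDelta _ L 1
        (adjoint (M k * compl V) (corner V M j h))))
    rw [ih hjL, ih hjL, hM.apply_adjoint_corner j k (Ne.symm hjk),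
      hM.corner_adjoint_apply j k (Ne.symm hjk), map_sub]
    rfl

/-- The Beurling condition makes the restrictions of the `M k` to the complement of the range of `V`
doubly commuting. Indeed `(Y i)* (Y i) (Y k)* (Y k) = 0` forces `(Y i) (Y k)* = 0`, that is,
`S (M i) V V* (M k)* S = 0`. -/
theorem doubly_compl (hE : ∀ i j, i ≠ j →
      (1 - adjoint (T i) * T i) * (1 - adjoint (T j) * T j) = 0) (i k : Fin n) (hik : i ≠ k) :
    Commute (M i * compl V) (star (M k * compl V)) := by
  have hstep : ∀ i k, i ≠ k → ∀ h,
      corner V M i (adjoint (corner V M k) (corner V M k h)) = 0 := by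
    intro i k hik h
    apply apply_eq_zero_of_adjoint_apply_eq_zero
    rw [hM.adjoint_corner_corner, hM.adjoint_corner_corner]
    exact DFunLike.congr_fun (hE i k hik) h
  have hzero : ∀ x, corner V M i (adjoint (corner V M k) x) = 0 := by
    intro x
    -- `(Y k)* (Y k) (Y i)* = 0` is the adjoint of `(Y i) (Y k)* (Y k) = 0`
    have h1 : ∀ y, corner V M k (adjoint (corner V M i) y) = 0 := by
      intro y
      apply apply_eq_zero_of_adjoint_apply_eq_zero
      refine ext_inner_right ℂ fun h => ?_
      rw [adjoint_inner_left, ← adjoint_inner_right (corner V M k), adjoint_inner_left,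
        hstep i k hik, inner_zero_right, inner_zero_left]
    refine ext_inner_right ℂ fun y => ?_
    rw [← adjoint_inner_right, adjoint_inner_left, h1, inner_zero_right, inner_zero_left]
  have hkey : ∀ x, compl V (M i (adjoint (M k) (compl V x)))
      = M i (compl V (adjoint (M k) (compl V x))) := by
    intro x
    have h1 := hzero x
    rw [corner_apply, adjoint_corner_apply] at h1
    have h2 : V (adjoint V (adjoint (M k) (compl V x)))
        = adjoint (M k) (compl V x) - compl V (adjoint (M k) (compl V x)) := by
      rw [compl_apply (adjoint (M k) _), sub_sub_cancel]
    rw [h2, map_sub, map_sub, sub_eq_zero, hM.compl_shift_compl] at h1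
    exact h1
  have hSS : ∀ x, compl V (compl V x) = compl V x := DFunLike.congr_fun hM.compl_mul_compl
  ext x
  rw [star_mul, star_compl, star_eq_adjoint]
  change M i (compl V (compl V (adjoint (M k) x))) = compl V (adjoint (M k) (M i (compl V x)))
  have hd : adjoint (M k) (M i (compl V x)) = M i (adjoint (M k) (compl V x)) :=
    (DFunLike.congr_fun (hM.doubly i k hik) _).symm
  -- `S (M k)*` vanishes on the range of `V`, so `S (M k)* = S (M k)* S`
  have hx : compl V (adjoint (M k) x) = compl V (adjoint (M k) (compl V x)) := by
    rw [compl_apply x, map_sub, map_sub, ← hM.lift, compl_apply (V _), hM.isom, sub_self,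
      sub_zero]
  rw [hSS, hd, hkey, hx]

/-- `(T i)*` preserves the kernel of `D²_{j,T,L} = (Y j)* F (Y j)`: since `F` is a projection this
kernel is that of `F (Y j)`, and `F (Y j) (T i)* = F (R i)* (Y j) = (R i)* F (Y j)`. -/
theorem ker_invariant (hE : ∀ i j, i ≠ j →
      (1 - adjoint (T i) * T i) * (1 - adjoint (T j) * T j) = 0)
    (j i : Fin n) (L : List (Fin n)) (hL : L.Nodup) (hj : j ∉ L) (hi : i ∉ L) (hij : i ≠ j)
    (h : H) (hh : applyDelta T L (1 - adjoint (T j) * T j) h = 0) :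
    applyDelta T L (1 - adjoint (T j) * T j) (adjoint (T i) h) = 0 := by
  have hSM : ∀ k, compl V * M k * compl V = M k * compl V := fun k => by
    ext x
    exact hM.compl_shift_compl k x
  have hRR : ∀ k, star (M k * compl V) * (M k * compl V) = compl V := fun k => by
    rw [star_mul, star_compl, mul_assoc, ← mul_assoc (star (M k)), star_eq_adjoint, hM.isometry,
      one_mul, hM.compl_mul_compl]
  obtain ⟨hstar, hidem, hcomm⟩ := applyDelta_one_isProjection (fun k => M k * compl V)
    (fun a b _ => by
      change M a * compl V * (M b * compl V) = M b * compl V * (M a * compl V)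
      rw [mul_assoc, ← mul_assoc (compl V), hSM, mul_assoc, ← mul_assoc (compl V), hSM,
        ← mul_assoc, hM.comm, mul_assoc])
    (fun a b hab => hM.doubly_compl hE a b hab)
    (fun k => by rw [mul_assoc, hRR, mul_assoc, hM.compl_mul_compl]) L hL
  rw [hM.applyDelta_defect j L hj] at hh ⊢
  rw [hM.corner_adjoint_apply j i hij]
  have hc := hcomm i hi
  set F := applyDelta (fun k => M k * compl V) L 1
  have hFY : F (corner V M j h) = 0 := by
    apply apply_eq_zero_of_adjoint_apply_eq_zero (F ∘L corner V M j) h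
    rw [adjoint_comp, ← star_eq_adjoint F, hstar]
    change adjoint (corner V M j) ((F * F) (corner V M j h)) = 0
    rw [hidem, hh]
  have hc' : Commute (star (M i * compl V)) F := by
    have := hc.star_star
    rwa [hstar] at this
  have hsw : F (star (M i * compl V) (corner V M j h))
      = star (M i * compl V) (F (corner V M j h)) := (DFunLike.congr_fun hc'.eq _).symm
  rw [hsw, hFY, map_zero, map_zero]

end IsModel

end Dilation

theorem adjoint_applyDelta {n : ℕ} (T : Fin n → H →L[ℂ] H) (L : List (Fin n)) (A : H →L[ℂ] H)
    (hA : adjoint A = A) : adjoint (applyDelta T L A) = applyDelta T L A := by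
  induction L with
  | nil => exact hA
  | cons k L ih =>
    change adjoint (applyDelta T L A - T k * applyDelta T L A * adjoint (T k)) =
      applyDelta T L A - T k * applyDelta T L A * adjoint (T k)
    simp only [← star_eq_adjoint, star_sub, star_mul, star_star] at ih ⊢
    rw [ih, mul_assoc]

/-- If `A` is self-adjoint and `X*` preserves `ker A`, then `X` preserves `(ker A)ᗮ`, the closure of
the range of `A`. -/
theorem image_closure_range_subset (A X : H →L[ℂ] H) (hA : adjoint A = A)
    (hX : ∀ h, A h = 0 → A (adjoint X h) = 0) :
    X '' closure (Set.range A) ⊆ closure (Set.range A) := by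
  have hcl : ∀ x, x ∈ closure (Set.range A) ↔ ∀ h, A h = 0 → ⟪h, x⟫_ℂ = 0 := by
    intro x
    have h1 : A.kerᗮ = A.range.topologicalClosure := by
      rw [orthogonal_ker, hA]
    have h2 : x ∈ closure (Set.range A) ↔ x ∈ A.range.topologicalClosure := by
      rw [← SetLike.mem_coe, Submodule.topologicalClosure_coe]
      rfl
    rw [h2, ← h1, Submodule.mem_orthogonal]
    rfl
  rintro _ ⟨x, hx, rfl⟩
  rw [hcl] at hx ⊢
  intro h hh
  rw [← adjoint_inner_left]
  exact hx _ (hX h hh)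

/-- For a Beurling tuple `T`, `j`, `P ⊆ {1,…,n} \ {j}` and `i ∉ P ∪ {j}`,
`Tᵢ` maps the truncated defect space `𝒟_{j,T,P}` (the closure of the range of
`D²_{j,T,P}`) into itself. -/
theorem beurling_maps_truncDefect_into_itself {n : ℕ} (hn : 0 < n)
    (T : Fin n → H →L[ℂ] H) (hT : IsBeurlingTuple T) (j : Fin n) (P : Finset (Fin n))
    (hP : j ∉ P) (i : Fin n) (hiP : i ∉ P) (hij : i ≠ j) :
    ⇑(T i) '' closure (Set.range ⇑(truncDefectSq T j P)) ⊆
      closure (Set.range ⇑(truncDefectSq T j P)) := by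
  obtain ⟨V, M, hM⟩ := exists_model T hT.1
  refine image_closure_range_subset _ _ (adjoint_applyDelta _ _ _ ?_) fun h hh => ?_
  · simp only [← star_eq_adjoint, star_sub, star_mul, star_star, star_one]
  · exact hM.ker_invariant hT.2 j i _ (Finset.sort_nodup _ _) (by simpa using hP)
      (by simpa using hiP) hij h hh
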